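/- arXiv:2006.13626 — 2 statements merged into one kernel-verified Lean document; each statement's English description precedes it below -/
import Mathlib

section
/- For every finite group G and every class α ∈ H³(G, ℂ*) there exist a finite group G' and a surjective group homomorphism π : G' → G such that the inflation (pullback) of α along π vanishes in H³(G', ℂ*). -/
/-!
The class is killed in two steps, both explicit on cochains; coefficients are written additively.

*Torsion.* Put `n = |G|`. Summing the cocycle identity over its first variable shows that `n • c` is
the coboundary of `(g, h) ↦ -∑ x, c x g h`. As `ℂˣ` is divisible, `c` can be changed by a
coboundary into a cocycle with values in the finite group `A` of `n`-th roots of unity.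

*Dimension shifting.* Embed `A` as the constants in the coinduced module `M = (G → A)`, on which `G`
acts by `(g • f) x = f (x * g)`. In `M` the cocycle `c` becomes, up to sign, the coboundary of
`(g, h) ↦ (x ↦ c x g h)`, so this 2-cochain is a 2-cocycle modulo constants. It defines an
extension `G'` of `G` by the finite group `M / A`. After inflation to `G'` the 2-cocycle is
tautologically a coboundary modulo constants; correcting the 2-cochain by the coboundary of a lift
of the tautological 1-cochain to `M` leaves a 2-cochain with constant values, that is, values in
`A`, whose coboundary is the inflation of `c` up to sign. The quotient `M / A` is realised as the
functions vanishing at `1`.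
-/


universe u

/-- `c : G³ → ℂ*` is a 3-cocycle for the trivial `G`-action on `ℂ*`
(written multiplicatively). -/
def IsMul3Cocycle {G : Type*} [Group G] (c : G → G → G → ℂˣ) : Prop :=
  ∀ g h k l : G, c g h (k * l) * c (g * h) k l = c h k l * c g (h * k) l * c g h k

/-- `c : G³ → ℂ*` is a 3-coboundary, i.e. its class in `H³(G, ℂ*)` is trivial. -/
def IsMul3Coboundary {G : Type*} [Group G] (c : G → G → G → ℂˣ) : Prop :=
  ∃ lam : G → G → ℂˣ, ∀ g h k : G,
    c g h k = lam g h * lam (g * h) k * (lam g (h * k))⁻¹ * (lam h k)⁻¹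

namespace KillH3

/-- Inhomogeneous 3-cocycles with values in an additive group with trivial action. -/
def IsCocycle {G A : Type*} [Group G] [AddCommGroup A] (c : G → G → G → A) : Prop :=
  ∀ g h k l : G, c g h (k * l) + c (g * h) k l = c h k l + c g (h * k) l + c g h k

/-- The coboundary of a 2-cochain, with the sign convention of `IsMul3Coboundary`. -/
def cobd {G A : Type*} [Group G] [AddCommGroup A] (m : G → G → A) (g h k : G) : A :=
  m g h + m (g * h) k - m g (h * k) - m h k

lemma IsCocycle.add_cobd {G A : Type*} [Group G] [AddCommGroup A] {c : G → G → G → A}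
    (hc : IsCocycle c) (m : G → G → A) : IsCocycle (fun g h k => c g h k + cobd m g h k) := by
  intro g h k l
  have := hc g h k l
  simp only [cobd, mul_assoc]
  linear_combination (norm := abel) this

/-- Averaging over the first variable: over a divisible coefficient group, every 3-cocycle of a
finite group is cohomologous to one killed by the order of the group. -/
lemma IsCocycle.exists_torsion {G A : Type*} [Group G] [AddCommGroup A] [Fintype G]
    {c : G → G → G → A} (hc : IsCocycle c)
    (hdiv : ∀ a : A, ∃ b : A, Fintype.card G • b = a) :
    ∃ m : G → G → A, ∀ g h k, Fintype.card G • (c g h k + cobd m g h k) = 0 := by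
  choose m hm using fun g h => hdiv (∑ x, c x g h)
  refine ⟨m, fun h k l => ?_⟩
  have key : ∑ x, c x h (k * l) + ∑ x, c x k l
      = Fintype.card G • c h k l + ∑ x, c x (h * k) l + ∑ x, c x h k := by
    have e : ∑ x, c (x * h) k l = ∑ x, c x k l :=
      Fintype.sum_equiv (Equiv.mulRight h) _ _ fun _ => rfl
    rw [← e, ← Finset.sum_add_distrib, Finset.sum_congr rfl fun x _ => hc x h k l]
    simp [Finset.sum_add_distrib]
  simp only [cobd, smul_add, smul_sub, hm]
  linear_combination (norm := abel) -key

section Extension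

variable {G A : Type*} [Group G] [AddCommGroup A] {c : G → G → G → A}

/-- The underlying set of the extension of `G` by `(G → A) / A` attached to a 3-cocycle `c`.
A class modulo constants is represented by its unique member vanishing at `1`. -/
@[ext]
structure Ext (c : G → G → G → A) where
  /-- The component in `(G → A) / A`. -/
  fn : G → A
  /-- The image in `G`. -/
  base : G
  fn_one : fn 1 = 0

/-- Multiplication twisted by the 2-cocycle `(g, h) ↦ (x ↦ c x g h)`, renormalised to vanish
at `1`. -/
instance : Mul (Ext c) where
  mul p q :=
    { fn := fun x => p.fn x + (q.fn (x * p.base) - q.fn p.base)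
        + (c x p.base q.base - c 1 p.base q.base)
      base := p.base * q.base
      fn_one := by simp [p.fn_one] }

lemma mul_fn (p q : Ext c) (x : G) : (p * q).fn x =
    p.fn x + (q.fn (x * p.base) - q.fn p.base) + (c x p.base q.base - c 1 p.base q.base) := rfl

lemma mul_base (p q : Ext c) : (p * q).base = p.base * q.base := rfl

lemma IsCocycle.one_one_one (hc : IsCocycle c) : c 1 1 1 = 0 := by
  have h := hc 1 1 1 1
  simp only [mul_one] at h
  linear_combination (norm := abel) -h

/-- The group structure on `Ext c`. Since `c` is not assumed normalised, the neutral element has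
the function component `x ↦ -c x 1 1`. -/
@[reducible]
def extGroup (hc : IsCocycle c) : Group (Ext c) :=
  letI : One (Ext c) := ⟨⟨fun x => -c x 1 1, 1, by simp [hc.one_one_one]⟩⟩
  letI : Inv (Ext c) := ⟨fun p =>
    { fn := fun x => -c x 1 1 - (p.fn (x * p.base⁻¹) - p.fn p.base⁻¹)
        - (c x p.base⁻¹ p.base - c 1 p.base⁻¹ p.base)
      base := p.base⁻¹
      fn_one := by simp [hc.one_one_one] }⟩
  Group.ofLeftAxioms
    (by
      intro p q r
      ext x
      · have h1 := hc x p.base q.base r.base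
        have h2 := hc 1 p.base q.base r.base
        simp only [one_mul] at h2
        simp only [mul_fn, mul_base, mul_assoc]
        linear_combination (norm := abel) h2 - h1
      · exact mul_assoc _ _ _)
    (by
      intro p
      ext x
      · have h1 := hc x 1 1 p.base
        simp only [mul_one, one_mul] at h1
        change -c x 1 1 + (p.fn (x * 1) - p.fn 1) + (c x 1 p.base - c 1 1 p.base) = p.fn x
        rw [mul_one, p.fn_one]
        linear_combination (norm := abel) h1
      · exact one_mul _)
    (by
      intro p
      ext x
      · change (-c x 1 1 - (p.fn (x * p.base⁻¹) - p.fn p.base⁻¹)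
          - (c x p.base⁻¹ p.base - c 1 p.base⁻¹ p.base))
          + (p.fn (x * p.base⁻¹) - p.fn p.base⁻¹)
          + (c x p.base⁻¹ p.base - c 1 p.base⁻¹ p.base) = -c x 1 1
        abel
      · exact inv_mul_cancel _)

lemma finite_ext [Finite G] [Finite A] : Finite (Ext c) :=
  Finite.of_injective (fun p : Ext c => (p.fn, p.base)) fun p q h => by
    simp only [Prod.mk.injEq] at h
    exact Ext.ext h.1 h.2

/-- The 2-cochain on the extension obtained by correcting `(g, h) ↦ (x ↦ c x g h)` by the
coboundary of the tautological 1-cochain `p ↦ p.fn`; the result does not depend on `x`. The sign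
makes its coboundary the inflation of `c`. -/
lemma IsCocycle.eq_cobd_ext (hc : IsCocycle c) (p q r : Ext c) :
    letI := extGroup hc
    c p.base q.base r.base =
      cobd (fun p q : Ext c => -(q.fn p.base + c 1 p.base q.base)) p q r := by
  have h2 := hc 1 p.base q.base r.base
  simp only [one_mul] at h2
  change c p.base q.base r.base = -(q.fn p.base + c 1 p.base q.base)
    + -(r.fn (p * q).base + c 1 (p * q).base r.base)
    - -((q * r).fn p.base + c 1 p.base (q * r).base) - -(r.fn q.base + c 1 q.base r.base)
  simp only [mul_fn, mul_base]
  linear_combination (norm := abel) -h2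

end Extension

/-- The dimension-shifting step: a 3-cocycle with finite coefficients dies in a finite extension. -/
lemma IsCocycle.exists_inflation {G : Type u} {A : Type} [Group G] [Finite G] [AddCommGroup A]
    [Finite A] {c : G → G → G → A} (hc : IsCocycle c) :
    ∃ (G' : Type u) (_ : Group G') (_ : Finite G') (π : G' →* G),
      Function.Surjective π ∧
        ∃ m : G' → G' → A, ∀ a b d, c (π a) (π b) (π d) = cobd m a b d := by
  let := extGroup hc
  exact ⟨Ext c, inferInstance, finite_ext, MonoidHom.mk' Ext.base mul_base,
    fun g => ⟨⟨0, g, rfl⟩, rfl⟩, _, hc.eq_cobd_ext⟩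

end KillH3

/-- For every finite group `G` and every class `α ∈ H³(G, ℂ*)` (represented by a
3-cocycle `c`), there are a finite group `G'` and a surjection `π : G' → G` such that
the inflation of `α` along `π` vanishes in `H³(G', ℂ*)`. -/
theorem stmt_3 {G : Type u} [Group G] [Finite G] (c : G → G → G → ℂˣ)
    (hc : IsMul3Cocycle c) :
    ∃ (G' : Type u) (_ : Group G') (_ : Finite G') (π : G' →* G),
      Function.Surjective π ∧
        IsMul3Coboundary (fun a b d : G' => c (π a) (π b) (π d)) := by
  classical
  have := Fintype.ofFinite G
  have hn : Fintype.card G ≠ 0 := Fintype.card_ne_zero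
  have : NeZero (Fintype.card G) := ⟨hn⟩
  let C : G → G → G → Additive ℂˣ := fun g h k => Additive.ofMul (c g h k)
  have hC : KillH3.IsCocycle C := fun g h k l => congrArg Additive.ofMul (hc g h k l)
  have hdiv : ∀ a : Additive ℂˣ, ∃ b : Additive ℂˣ, Fintype.card G • b = a := by
    intro a
    obtain ⟨z, hz⟩ := IsAlgClosed.exists_pow_nat_eq ((a.toMul : ℂˣ) : ℂ) (Nat.pos_of_ne_zero hn)
    have hz0 : z ≠ 0 := by
      rintro rfl
      rw [zero_pow hn] at hz
      exact a.toMul.ne_zero hz.symm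
    exact ⟨Additive.ofMul (Units.mk0 z hz0), congrArg Additive.ofMul
      (Units.ext (by simpa using hz) : (Units.mk0 z hz0) ^ Fintype.card G = a.toMul)⟩
  obtain ⟨m, hm⟩ := hC.exists_torsion hdiv
  let A := rootsOfUnity (Fintype.card G) ℂ
  let ι : Additive A →+ Additive ℂˣ := A.subtype.toAdditive
  have hι : Function.Injective ι := A.subtype_injective
  have : Finite (Additive A) := inferInstanceAs (Finite A)
  let D : G → G → G → Additive A := fun g h k =>
    Additive.ofMul ⟨(C g h k + KillH3.cobd m g h k).toMul, congrArg Additive.toMul (hm g h k)⟩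
  have hD : KillH3.IsCocycle D := fun g h k l => hι (hC.add_cobd m g h k l)
  obtain ⟨G', i1, i2, π, hπ, t, ht⟩ := hD.exists_inflation
  refine ⟨G', i1, i2, π, hπ,
    fun a b => (ι (t a b) - m (π a) (π b)).toMul, fun a b d => ?_⟩
  have h1 : C (π a) (π b) (π d) + KillH3.cobd m (π a) (π b) (π d) = ι (KillH3.cobd t a b d) :=
    congrArg ι (ht a b d)
  have h2 : C (π a) (π b) (π d) = KillH3.cobd (fun a b => ι (t a b) - m (π a) (π b)) a b d := by
    simp only [KillH3.cobd, map_add, map_sub, map_mul] at h1 ⊢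
    linear_combination (norm := abel) h1
  rw [KillH3.cobd, sub_eq_add_neg, sub_eq_add_neg] at h2
  exact congrArg Additive.toMul h2
end

section
/- For every integer n ≥ 1, the inflation map H³(ℤ/nℤ, ℂ*) → H³(ℤ/n²ℤ, ℂ*) induced by the canonical surjection ℤ/n²ℤ ↠ ℤ/nℤ is the zero map. -/
/-!
The trivialising 2-cochain is explicit. For `m : ℕ` put `C x m = ∏_{i < m} c(x, i, 1)`. Multiplying
the cocycle identities at `(x, g, h, 1)` over `h < k` gives (`IsAdd3Cocycle.mul_partialProd`)
`c(x, g, k) * C (x + g) k * C x g = c(x, g, 0) * C g k * C x (g + k)` for all `g k : ℕ`,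
and `c(x, g, 0) = e (x + g) / e g` with `e x = c(x, 0, 0)`. Hence `c` pulled back to `ℕ` is the
coboundary of `(x, m) ↦ e x / C x m`.

This cochain descends to `ℤ/n²`. Indeed `C x (n + m) = C x n * C x m`, and the displayed identity
at `k = n` says that `x ↦ C x n` is a homomorphism on `ℤ/n`. Its values are therefore `n`-th roots
of unity, so `C x` is periodic of period `n²`.
-/

/-- `c : M³ → ℂ*` is a 3-cocycle on the (additively written) abelian group `M`
for the trivial action on `ℂ*`. -/
def IsAdd3Cocycle {M : Type*} [AddGroup M] (c : M → M → M → ℂˣ) : Prop :=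
  ∀ g h k l : M, c g h (k + l) * c (g + h) k l = c h k l * c g (h + k) l * c g h k

/-- `c : M³ → ℂ*` is a 3-coboundary, i.e. its class in `H³(M, ℂ*)` is trivial. -/
def IsAdd3Coboundary {M : Type*} [AddGroup M] (c : M → M → M → ℂˣ) : Prop :=
  ∃ lam : M → M → ℂˣ, ∀ g h k : M,
    c g h k = lam g h * lam (g + h) k * (lam g (h + k))⁻¹ * (lam h k)⁻¹

/-- The product `∏_{i < m} c(x, i, 1)`, for a natural number `m` and an element `x` of `ℤ/n`. -/
def partialProd {n : ℕ} (c : ZMod n → ZMod n → ZMod n → ℂˣ) (x : ZMod n) (m : ℕ) : ℂˣ :=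
  ∏ i ∈ Finset.range m, c x i 1

lemma partialProd_succ {n : ℕ} (c : ZMod n → ZMod n → ZMod n → ℂˣ) (x : ZMod n) (m : ℕ) :
    partialProd c x (m + 1) = partialProd c x m * c x m 1 :=
  Finset.prod_range_succ _ _

lemma partialProd_add_self {n : ℕ} (c : ZMod n → ZMod n → ZMod n → ℂˣ) (x : ZMod n) (m : ℕ) :
    partialProd c x (m + n) = partialProd c x m * partialProd c x n := by
  rw [add_comm, mul_comm]
  simp [partialProd, Finset.prod_range_add]

/-- On natural-number representatives of the last two arguments, a 3-cocycle agrees with the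
coboundary of `partialProd c` inverted, up to the normalisation term `c x g 0`. -/
lemma IsAdd3Cocycle.mul_partialProd {n : ℕ} {c : ZMod n → ZMod n → ZMod n → ℂˣ}
    (hc : IsAdd3Cocycle c) (x : ZMod n) (g k : ℕ) :
    c x g k * partialProd c (x + g) k * partialProd c x g =
      c x g 0 * partialProd c g k * partialProd c x (g + k) := by
  induction k with
  | zero => simp [partialProd]
  | succ k ih =>
    have h := hc x g k 1
    rw [← add_assoc, partialProd_succ, partialProd_succ, partialProd_succ]
    push_cast
    calc c x g (k + 1) * (partialProd c (x + g) k * c (x + g) k 1) * partialProd c x g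
        = (c x g (k + 1) * c (x + g) k 1) * (partialProd c (x + g) k * partialProd c x g) := by
          ac_rfl
      _ = (c x g k * partialProd c (x + g) k * partialProd c x g) *
            (c g k 1 * c x (g + k) 1) := by rw [h]; ac_rfl
      _ = _ := by rw [ih]; ac_rfl

/-- The full product `x ↦ ∏_{i < n} c(x, i, 1)` is a homomorphism `ℤ/n → ℂ*`. -/
lemma IsAdd3Cocycle.partialProd_self_add {n : ℕ} {c : ZMod n → ZMod n → ZMod n → ℂˣ}
    (hc : IsAdd3Cocycle c) (x : ZMod n) (g : ℕ) :
    partialProd c (x + g) n = partialProd c x n * partialProd c g n := by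
  have h := hc.mul_partialProd x g n
  rw [partialProd_add_self, ZMod.natCast_self] at h
  apply mul_left_cancel (a := c x g 0 * partialProd c x g)
  calc _ = c x g 0 * partialProd c (x + g) n * partialProd c x g := by ac_rfl
    _ = _ := by rw [h]; ac_rfl

lemma IsAdd3Cocycle.partialProd_self_pow {n : ℕ} [NeZero n]
    {c : ZMod n → ZMod n → ZMod n → ℂˣ} (hc : IsAdd3Cocycle c) (x : ZMod n) :
    partialProd c x n ^ n = 1 := by
  have h0 : partialProd c 0 n = 1 := by
    simpa using hc.partialProd_self_add 0 0
  have h (m : ℕ) : partialProd c (m * x) n = partialProd c x n ^ m := by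
    induction m with
    | zero => simpa using h0
    | succ m ih =>
      have := hc.partialProd_self_add (m * x) x.val
      rw [ZMod.natCast_zmod_val, ih] at this
      rw [pow_succ, ← this]
      push_cast
      rw [add_mul, one_mul]
  rw [← h n, ZMod.natCast_self, zero_mul, h0]

lemma IsAdd3Cocycle.partialProd_periodic {n : ℕ} [NeZero n]
    {c : ZMod n → ZMod n → ZMod n → ℂˣ} (hc : IsAdd3Cocycle c) (x : ZMod n) :
    Function.Periodic (partialProd c x) (n ^ 2) := by
  have h (m k : ℕ) : partialProd c x (m + n * k) = partialProd c x m * partialProd c x n ^ k := by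
    induction k with
    | zero => simp
    | succ k ih => rw [mul_add, mul_one, ← add_assoc, partialProd_add_self, ih, pow_succ, mul_assoc]
  intro m
  rw [pow_two, h, hc.partialProd_self_pow, mul_one]

/-- The term measuring the failure of `c` to be normalised is itself a coboundary: that of
`(g, h) ↦ c g 0 0`. -/
lemma IsAdd3Cocycle.apply_zero_mul {n : ℕ} {c : ZMod n → ZMod n → ZMod n → ℂˣ}
    (hc : IsAdd3Cocycle c) (g h : ZMod n) : c g h 0 * c h 0 0 = c (g + h) 0 0 := by
  have := hc g h 0 0
  simp only [add_zero] at this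
  apply mul_left_cancel (a := c g h 0)
  rw [this]
  ac_rfl

/-- The inflation map `H³(ℤ/n, ℂ*) → H³(ℤ/n², ℂ*)` along the canonical surjection
`ℤ/n² ↠ ℤ/n` is zero: the pullback of any 3-cocycle on `ℤ/n` is a 3-coboundary on
`ℤ/n²`. -/
theorem stmt_4 (n : ℕ) (hn : 1 ≤ n) (c : ZMod n → ZMod n → ZMod n → ℂˣ)
    (hc : IsAdd3Cocycle c) :
    IsAdd3Coboundary fun a b d : ZMod (n ^ 2) =>
      c (ZMod.castHom ⟨n, pow_two n⟩ (ZMod n) a) (ZMod.castHom ⟨n, pow_two n⟩ (ZMod n) b)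
        (ZMod.castHom ⟨n, pow_two n⟩ (ZMod n) d) := by
  have : NeZero n := ⟨by omega⟩
  refine ⟨fun a b => c (ZMod.castHom ⟨n, pow_two n⟩ (ZMod n) a) 0 0 *
    (partialProd c (ZMod.castHom ⟨n, pow_two n⟩ (ZMod n) a) b.val)⁻¹, fun a b d => ?_⟩
  have hval (y : ZMod (n ^ 2)) : ((y.val : ℕ) : ZMod n) =
      ZMod.castHom ⟨n, pow_two n⟩ (ZMod n) y := by
    rw [ZMod.natCast_val, ZMod.castHom_apply]
  dsimp only
  rw [ZMod.val_add, (hc.partialProd_periodic _).map_mod_nat, map_add]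
  have key := hc.mul_partialProd (ZMod.castHom ⟨n, pow_two n⟩ (ZMod n) a) b.val d.val
  rw [hval, hval] at key
  rw [← hc.apply_zero_mul]
  generalize ZMod.castHom _ (ZMod n) a = x at *
  generalize ZMod.castHom _ (ZMod n) b = y at *
  generalize ZMod.castHom _ (ZMod n) d = z at *
  have hx : c x y z = c x y 0 * partialProd c y d.val * partialProd c x (b.val + d.val) *
      (partialProd c x b.val)⁻¹ * (partialProd c (x + y) d.val)⁻¹ := by
    rw [← key]
    simp
  rw [hx]
  simp only [mul_inv, inv_inv]
  -- An identity in an abelian group; `field_simp` closes it once it is read in the field `ℂ`.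
  apply Units.ext
  push_cast
  field_simp
end
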